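/- arXiv:0711.4453 — 2 statements merged into one kernel-verified Lean document; each statement's English description precedes it below -/
import Mathlib

section
/- For every τ in the complex upper half-plane ℍ and every t ∈ ℂ, the Jacobi theta function satisfies the modular transformation θ(t/τ, −1/τ) = (1/i) · √(τ/i) · e^{πit²/τ} · θ(t, τ), where √(τ/i) denotes the principal branch of the square root (note τ/i has positive real part for τ ∈ ℍ). -/
/-!
The classical proof. By the Jacobi triple product (see `jTheta_eq`),
`θ(t,τ) = -i · e^{πiτ/4 + πit} · ∑ₙ exp(2πi n z + πi n² τ)` with `z = t + τ/2 + 1/2`, and the sum is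
Mathlib's `jacobiTheta₂ z τ`, whose transformation under `τ ↦ -1/τ` is known by Poisson summation.
Since `t/τ + (-1/τ)/2 + 1/2 = (z - 1)/τ` and `jacobiTheta₂` is `1`-periodic in its first argument,
what remains is an identity between exponential prefactors.

Mathlib has no triple product identity. It is obtained here from its finite form (`finite_triple`),
`∏_{k=1}^{M} (1 - qᵏx) ∏_{k=0}^{N-1} (1 - qᵏ/x) = ∑ⱼ [M+N choose N+j]_q eⱼ`,
where `e₀ = 1` and `eⱼ₊₁ = -x q^{j+1} eⱼ`, proved by induction from the two `q`-Pascal identities;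
letting `M, N → ∞` under the sum, by dominated convergence (`triple_product`), turns every `q`-binomial coefficient
into `1 / ∏ (1 - qⁿ)`.
-/

open Complex Topology Filter

/-- `q = e^{2πiτ}`. -/
noncomputable def jq (τ : ℂ) : ℂ := Complex.exp (2 * Real.pi * I * τ)

/-- The Jacobi theta function
`θ(t,τ) = q^{1/8} · 2 sin(πt) · ∏_{n≥1}(1−qⁿ) · ∏_{n≥1}(1−qⁿe^{2πit})(1−qⁿe^{−2πit})`,
where `q^{1/8} = e^{πiτ/4}`. -/
noncomputable def jTheta (t τ : ℂ) : ℂ :=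
  Complex.exp (Real.pi * I * τ / 4) * (2 * Complex.sin (Real.pi * t)) *
    (∏' n : ℕ, (1 - jq τ ^ (n + 1))) *
    (∏' n : ℕ, (1 - jq τ ^ (n + 1) * Complex.exp (2 * Real.pi * I * t)) *
      (1 - jq τ ^ (n + 1) * Complex.exp (-(2 * Real.pi * I * t))))

/-- The `q`-factorial `(q; q)ₙ = ∏_{k=1}^{n} (1 - qᵏ)`. -/
noncomputable def qPoch (q : ℂ) (n : ℕ) : ℂ := ∏ k ∈ Finset.range n, (1 - q ^ (k + 1))

/-- The reciprocal `1 / (q; q)ₖ` for an integer index `k`, equal to `0` when `k < 0`. With this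
convention `qPoch q n * qInv q k * qInv q (n - k)` is the `q`-binomial coefficient for every
integer `k`, and `qInv_sub_one` holds without boundary cases. -/
noncomputable def qInv (q : ℂ) (k : ℤ) : ℂ := if k < 0 then 0 else (qPoch q k.toNat)⁻¹

lemma qInv_natCast (q : ℂ) (n : ℕ) : qInv q n = (qPoch q n)⁻¹ := by
  simp [qInv]

lemma one_sub_pow_ne_zero {q : ℂ} (hq : ‖q‖ < 1) (n : ℕ) : 1 - q ^ (n + 1) ≠ 0 := by
  intro h
  have h1 : ‖q ^ (n + 1)‖ < 1 := by
    rw [norm_pow]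
    exact pow_lt_one₀ (norm_nonneg _) hq (by omega)
  rw [← sub_eq_zero.mp h] at h1
  simp at h1

/-- The recursion `1 / (q; q)ₖ₋₁ = (1 - qᵏ) / (q; q)ₖ`, valid for all integers `k`; both `q`-Pascal
identities follow from it. -/
lemma qInv_sub_one {q : ℂ} (hq : ‖q‖ < 1) (k : ℤ) :
    qInv q (k - 1) = (1 - q ^ k) * qInv q k := by
  rcases lt_trichotomy k 0 with hk | rfl | hk
  · simp [qInv, hk, show k - 1 < 0 by omega]
  · simp [qInv]
  · obtain ⟨n, rfl⟩ : ∃ n : ℕ, k = ((n + 1 : ℕ) : ℤ) := ⟨(k - 1).toNat, by omega⟩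
    have h1 : ((n + 1 : ℕ) : ℤ) - 1 = (n : ℤ) := by push_cast; ring
    have := one_sub_pow_ne_zero hq n
    rw [h1, qInv_natCast, qInv_natCast, qPoch, qPoch, Finset.prod_range_succ, zpow_natCast,
      mul_inv]
    field_simp

/-- The finite form of the Jacobi triple product. The hypotheses on `e` say that
`e j = (-x)ʲ q^{j(j+1)/2}`; the sum over `ℤ` has finite support by the convention in `qInv`. -/
lemma finite_triple {q x : ℂ} (hq : ‖q‖ < 1) (hq0 : q ≠ 0) (hx : x ≠ 0) {e : ℤ → ℂ}
    (e0 : e 0 = 1) (he : ∀ j, e (j + 1) = -x * q ^ (j + 1) * e j) (M N : ℕ) :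
    HasSum (fun j : ℤ ↦ qPoch q (M + N) * qInv q (N + j) * qInv q (M - j) * e j)
      ((∏ k ∈ Finset.range M, (1 - q ^ (k + 1) * x)) *
        ∏ k ∈ Finset.range N, (1 - q ^ k * x⁻¹)) := by
  have hQ (n : ℕ) : qPoch q (n + 1) = qPoch q n * (1 - q ^ (n + 1)) := by
    rw [qPoch, qPoch, Finset.prod_range_succ]
  induction M with
  | zero =>
    induction N with
    | zero =>
      convert hasSum_single (0 : ℤ) ?_ using 1
      · simp [qPoch, qInv, e0]
      · intro j hj
        rcases lt_or_gt_of_ne hj with h | h <;> simp [qInv, h]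
    | succ N ih =>
      -- multiplication by `1 - q ^ N / x` adds to the sum a multiple of its shift by one
      have hs := (Equiv.addRight (1 : ℤ)).hasSum_iff.mpr ih
      rw [Finset.prod_range_succ]
      convert ih.add (hs.mul_left (-(q ^ N * x⁻¹))) using 1
      · funext j
        have h1 := qInv_sub_one hq (N + j + 1)
        have h2 := qInv_sub_one hq (-j)
        have e1 : (N : ℤ) + j + 1 - 1 = N + j := by ring
        have e2 : (N : ℤ) + (j + 1) = N + j + 1 := by ring
        have e3 : ((N + 1 : ℕ) : ℤ) + j = N + j + 1 := by push_cast; ring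
        have e4 : ((0 : ℕ) : ℤ) - j = -j := by simp
        have e5 : ((0 : ℕ) : ℤ) - (j + 1) = -j - 1 := by push_cast; ring
        have e6 : 0 + (N + 1) = (0 + N) + 1 := by ring
        rw [e1] at h1
        simp only [Function.comp, Equiv.coe_addRight, e2, e3, e4, e5, e6, hQ, he, h1, h2]
        simp only [zpow_add₀ hq0, zpow_neg, zpow_natCast, zpow_one]
        have := zpow_ne_zero j hq0
        field_simp
        simp only [zero_add]
        ring
      · ring
  | succ M ih =>
    have hs := (Equiv.subRight (1 : ℤ)).hasSum_iff.mpr ih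
    rw [Finset.prod_range_succ]
    convert ih.add (hs.mul_left (-(q ^ (M + 1) * x))) using 1
    · funext j
      have h1 := qInv_sub_one hq (N + j)
      have h2 := qInv_sub_one hq (M + 1 - j)
      have h3 := he (j - 1)
      have e1 : (M : ℤ) + 1 - j - 1 = M - j := by ring
      have e2 : (N : ℤ) + (j - 1) = N + j - 1 := by ring
      have e3 : ((M + 1 : ℕ) : ℤ) - j = M + 1 - j := by push_cast; ring
      have e4 : (M : ℤ) - (j - 1) = M + 1 - j := by ring
      have e6 : M + 1 + N = (M + N) + 1 := by ring
      rw [e1] at h2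
      rw [sub_add_cancel] at h3
      simp only [Function.comp, Equiv.subRight_apply, e2, e3, e4, e6, hQ, h1, h2, h3]
      simp only [zpow_add₀ hq0, zpow_sub₀ hq0, zpow_natCast, zpow_one]
      have := zpow_ne_zero j hq0
      field_simp
      ring
    · ring

/-- The Jacobi triple product, for a bilateral series with terms `e j = (-x)ʲ q^{j(j+1)/2}`. -/
lemma triple_product {q x : ℂ} (hq : ‖q‖ < 1) (hq0 : q ≠ 0) (hx : x ≠ 0) {e : ℤ → ℂ}
    (e0 : e 0 = 1) (he : ∀ j, e (j + 1) = -x * q ^ (j + 1) * e j) (hs : Summable e) :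
    ∑' j, e j = (1 - x⁻¹) * (∏' n : ℕ, (1 - q ^ (n + 1))) *
      ∏' n : ℕ, (1 - q ^ (n + 1) * x) * (1 - q ^ (n + 1) * x⁻¹) := by
  set P : ℂ := ∏' n : ℕ, (1 - q ^ (n + 1)) with hP
  have hsum : Summable fun n : ℕ ↦ ‖q ^ (n + 1)‖ := by
    simpa using (summable_nat_add_iff 1).mpr (summable_geometric_of_lt_one (norm_nonneg _) hq)
  have hmul (y : ℂ) : Multipliable fun n : ℕ ↦ 1 - q ^ (n + 1) * y := by
    simp_rw [sub_eq_add_neg]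
    apply multipliable_one_add_of_summable
    simpa using hsum.mul_right ‖y‖
  have hP0 : P ≠ 0 := by
    have := tprod_one_add_ne_zero_of_summable (f := fun n : ℕ ↦ -q ^ (n + 1))
      (fun n ↦ by simpa [← sub_eq_add_neg] using one_sub_pow_ne_zero hq n) (by simpa using hsum)
    simpa [← sub_eq_add_neg] using this
  have hQ : Tendsto (qPoch q) atTop (𝓝 P) :=
    (ModularForm.multipliable_one_sub_pow hq).hasProd.tendsto_prod_nat
  have hQi : Tendsto (fun n ↦ (qPoch q n)⁻¹) atTop (𝓝 P⁻¹) := hQ.inv₀ hP0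
  have hR : Tendsto (qInv q) atTop (𝓝 P⁻¹) := by
    have ht : Tendsto Int.toNat atTop atTop :=
      tendsto_atTop.mpr fun n ↦ (eventually_ge_atTop (n : ℤ)).mono fun k hk ↦ by omega
    refine (hQi.comp ht).congr' ?_
    filter_upwards [eventually_ge_atTop (0 : ℤ)] with k hk
    simp [qInv, not_lt.mpr hk]
  obtain ⟨A, hA⟩ := (Metric.isBounded_range_of_tendsto _ hQ).exists_norm_le
  obtain ⟨B, hB⟩ := (Metric.isBounded_range_of_tendsto _ hQi).exists_norm_le
  have hA' (n : ℕ) : ‖qPoch q n‖ ≤ A := hA _ ⟨n, rfl⟩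
  have hB' (k : ℤ) : ‖qInv q k‖ ≤ B := by
    have h0 : ‖(qPoch q k.toNat)⁻¹‖ ≤ B := hB _ ⟨k.toNat, rfl⟩
    rw [qInv]
    split_ifs
    · simpa using (norm_nonneg _).trans h0
    · exact h0
  have hA0 : 0 ≤ A := (norm_nonneg _).trans (hA' 0)
  have hB0 : 0 ≤ B := (norm_nonneg _).trans (hB' 0)
  -- with `N + 1` factors in the second product, its factor at `k = 0` supplies `1 - x⁻¹`
  have key (N : ℕ) := finite_triple hq hq0 hx e0 he N (N + 1)
  have hlim : Tendsto (fun N : ℕ ↦ ∑' j : ℤ, qPoch q (N + (N + 1)) *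
      qInv q ((N + 1 : ℕ) + j) * qInv q (N - j) * e j) atTop
      (𝓝 (∑' j : ℤ, P * P⁻¹ * P⁻¹ * e j)) := by
    refine tendsto_tsum_of_dominated_convergence (bound := fun j ↦ A * B * B * ‖e j‖)
      (hs.norm.mul_left _) (fun j ↦ ?_) (.of_forall fun N j ↦ ?_)
    · refine Tendsto.mul_const _ (Tendsto.mul (Tendsto.mul ?_ ?_) ?_)
      · exact hQ.comp (tendsto_atTop_mono (fun n ↦ by simp) tendsto_id)
      · refine hR.comp (tendsto_atTop_add_const_right _ _ ?_)
        exact tendsto_natCast_atTop_atTop.comp (tendsto_add_atTop_nat 1)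
      · simp_rw [sub_eq_add_neg]
        exact hR.comp (tendsto_atTop_add_const_right _ _ tendsto_natCast_atTop_atTop)
    · simp only [norm_mul]
      gcongr
      · exact hA' _
      · exact hB' _
      · exact hB' _
  have hprod := (((hmul x).mul (hmul x⁻¹)).hasProd.tendsto_prod_nat).const_mul (1 - x⁻¹)
  have heq := tendsto_nhds_unique hlim (hprod.congr fun N ↦ by
    rw [(key N).tsum_eq, Finset.prod_range_succ', Finset.prod_mul_distrib]
    simp
    ring)
  rw [tsum_mul_left, mul_inv_cancel₀ hP0, one_mul] at heq
  rw [mul_right_comm, ← heq]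
  field_simp

/-- The theta function as a series: `jTheta` is `jacobiTheta₂` at the shifted argument
`t + τ / 2 + 1 / 2`, up to an exponential factor. -/
lemma jTheta_eq {τ : ℂ} (hτ : 0 < τ.im) (t : ℂ) :
    jTheta t τ = -I * exp (Real.pi * I * τ / 4 + Real.pi * I * t) *
      jacobiTheta₂ (t + τ / 2 + 1 / 2) τ := by
  have hq : ‖jq τ‖ < 1 := UpperHalfPlane.norm_exp_two_pi_I_lt_one ⟨τ, hτ⟩
  have hx : exp (-(2 * Real.pi * I * t)) = (exp (2 * Real.pi * I * t))⁻¹ := exp_neg _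
  have h := triple_product (e := fun n ↦ jacobiTheta₂_term n (t + τ / 2 + 1 / 2) τ) hq
    (exp_ne_zero _) (exp_ne_zero (2 * Real.pi * I * t)) (by simp [jacobiTheta₂_term])
    (fun j ↦ by
      rw [jacobiTheta₂_term, jacobiTheta₂_term, jq, ← exp_int_mul, ← neg_one_mul (exp _),
        ← exp_pi_mul_I, ← exp_add, ← exp_add, ← exp_add]
      congr 1
      push_cast
      ring)
    ((summable_jacobiTheta₂_term_iff _ _).mpr hτ)
  rw [jacobiTheta₂, h, jTheta, hx, exp_add]
  have hsin : 2 * sin (Real.pi * t) =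
      -I * exp (Real.pi * I * t) * (1 - (exp (2 * Real.pi * I * t))⁻¹) := by
    rw [← hx, mul_sub, mul_assoc _ _ (exp _), ← exp_add, sin]
    ring_nf
  rw [hsin]
  ring

/-- Modular transformation under `τ ↦ −1/τ`:
`θ(t/τ, −1/τ) = (1/i)·√(τ/i)·e^{πit²/τ}·θ(t,τ)`, with the principal square root
`√(τ/i) = (τ/i)^{1/2}`. -/
theorem jacobiTheta_modular (τ : ℂ) (hτ : 0 < τ.im) (t : ℂ) :
    jTheta (t / τ) (-1 / τ) =
      (1 / I) * (τ / I) ^ ((1 : ℂ) / 2) * Complex.exp (Real.pi * I * t ^ 2 / τ) *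
        jTheta t τ := by
  have hτ0 : τ ≠ 0 := by rintro rfl; simp at hτ
  have hτ' : 0 < (-1 / τ).im := by
    rw [neg_div, neg_im, one_div, inv_im, neg_div, neg_neg]
    exact div_pos hτ (normSq_pos.mpr hτ0)
  have hfe := jacobiTheta₂_functional_equation (t + τ / 2 - 1 / 2) τ
  have hper := jacobiTheta₂_add_left (t + τ / 2 - 1 / 2) τ
  have hz1 : t + τ / 2 - 1 / 2 + 1 = t + τ / 2 + 1 / 2 := by ring
  have hz2 : t / τ + -1 / τ / 2 + 1 / 2 = (t + τ / 2 - 1 / 2) / τ := by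
    field_simp
    ring
  have hI : -I * τ = τ / I := by rw [div_I]; ring
  have hc : (τ / I) ^ ((1 : ℂ) / 2) ≠ 0 := by
    rw [Ne, cpow_eq_zero_iff]
    simp [hτ0]
  rw [jTheta_eq hτ', jTheta_eq hτ, hz2, ← hz1, hper, hfe, hI]
  generalize jacobiTheta₂ ((t + τ / 2 - 1 / 2) / τ) (-1 / τ) = J
  -- completing the square; the leftover factor `exp (-πi/2) = -i` is the `1 / i` of the claim
  have hexp : exp (Real.pi * I * (-1 / τ) / 4 + Real.pi * I * (t / τ)) =
      -I * (exp (Real.pi * I * t ^ 2 / τ) * exp (Real.pi * I * τ / 4 + Real.pi * I * t) *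
        exp (-Real.pi * I * (t + τ / 2 - 1 / 2) ^ 2 / τ)) := by
    rw [← exp_neg_pi_div_two_mul_I, ← exp_add, ← exp_add, ← exp_add]
    congr 1
    field_simp
    ring
  rw [hexp, one_div I, inv_I]
  field_simp
end

section
/- Fix τ ∈ ℍ and z ∈ ℂ with z ∉ ℤ+τℤ, 2z ∉ ℤ+τℤ. Let F₁(t) = [θ(t+z)θ'(0)/(θ(t)θ(z))] · [θ(t+2z)θ'(0)/(θ(t)θ(2z))] · [θ(t−2z)θ'(0)/(θ(t)θ(−2z))] · [θ(t−2z)θ(z)/(θ(t−z)θ(2z))]. Then for all sufficiently small r > 0, the residue of F₁ at t = 0, namely (1/(2πi)) times the integral of F₁ over the positively oriented circle of radius r centered at 0, equals (θ'(0)/θ(z))² · θ(3z)θ(z)/θ(2z)². -/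
/-!
`F₁` is an elliptic function of `t`: the arguments of the thetas in its numerator and in its
denominator both sum to `4t - z`, so the factors of automorphy in `th_add_one` and `th_add_tau`
cancel (`F₁_add_one`, `F₁_add_tau`). As `θ` does not vanish off the lattice (`th_ne_zero`) and its
zero at `0` is simple (`thd_ne_zero`), the only poles modulo `ℤ + τℤ` are a triple pole at `0` and a
simple pole at `z`. The residues of an elliptic function add up to zero, so the residue at `0` is
minus the one at `z`, which can be evaluated directly (`F₁_near_z`).

The vanishing of the sum of residues (`residue_sum_eq_zero`) is obtained without integrating over a
period parallelogram. With `L = θ'/θ`, which has period `1` and satisfies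
`L (t + τ) = L t - 2πi`, the principal parts `c / (t - z)` and `a₀ / t³ + a₁ / t² + a₂ / t` of `F₁`
are removed by subtracting `c L(t - z) + a₂ L(t) - a₁ L'(t) + (a₀ / 2) L''(t)`. The difference
extends to an entire function (`exists_entire_of_removable`) of period `1` which changes by the
constant `2πi (c + a₂)` under `t ↦ t + τ`. By Liouville applied to its derivative, that constant
is `0` (`additive_period_eq_zero`). Finally, `circleIntegral_laurent` identifies `a₂` with the
integral over a small circle.

The lemmas on `F₁` include the degenerate case `θ(2z) = 0`, in which `F₁` vanishes identically by the
convention `x / 0 = 0`.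
-/

open Complex Topology Filter

/-- `θ(t)` with `τ` fixed. -/
noncomputable def th (τ t : ℂ) : ℂ := jTheta t τ

/-- `θ'(0)`, the derivative of `θ(·,τ)` at `t = 0`. -/
noncomputable def thd (τ : ℂ) : ℂ := deriv (fun t => jTheta t τ) 0

/-- Membership in the lattice `ℤ + τℤ`. -/
def inLat (τ t : ℂ) : Prop := ∃ m n : ℤ, t = (m : ℂ) + (n : ℂ) * τ

/-- The function `F₁` arising in Case 1 of the proof of birational invariance:
`F₁(t) = [θ(t+z)θ'(0)/(θ(t)θ(z))]·[θ(t+2z)θ'(0)/(θ(t)θ(2z))]·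
[θ(t−2z)θ'(0)/(θ(t)θ(−2z))]·[θ(t−2z)θ(z)/(θ(t−z)θ(2z))]`. -/
noncomputable def F₁ (τ z t : ℂ) : ℂ :=
  (th τ (t + z) * thd τ / (th τ t * th τ z)) *
  (th τ (t + 2 * z) * thd τ / (th τ t * th τ (2 * z))) *
  (th τ (t - 2 * z) * thd τ / (th τ t * th τ (-(2 * z)))) *
  (th τ (t - 2 * z) * th τ z / (th τ (t - z) * th τ (2 * z)))

/-! ### The theta function: transformation laws and zeros -/

/-- The Euler-type product `∏_{n ≥ 1} (1 - qⁿ x)`. -/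
noncomputable def eulerProd (q x : ℂ) : ℂ := ∏' n : ℕ, (1 - q ^ (n + 1) * x)

lemma summable_pow_succ_mul {q : ℂ} (hq : ‖q‖ < 1) (x : ℂ) :
    Summable fun n : ℕ => ‖-(q ^ (n + 1) * x)‖ := by
  simp only [norm_neg, norm_mul, norm_pow]
  exact ((summable_nat_add_iff 1).mpr
    (summable_geometric_of_lt_one (norm_nonneg _) hq)).mul_right _

lemma multipliable_eulerProd {q : ℂ} (hq : ‖q‖ < 1) (x : ℂ) :
    Multipliable fun n : ℕ => 1 - q ^ (n + 1) * x := by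
  simpa [sub_eq_add_neg] using multipliable_one_add_of_summable (summable_pow_succ_mul hq x)

lemma eulerProd_eq {q : ℂ} (hq : ‖q‖ < 1) (x : ℂ) :
    eulerProd q x = (1 - q * x) * eulerProd q (q * x) := by
  have h := multipliable_eulerProd hq (q * x)
  have e : (fun n : ℕ => 1 - q ^ (n + 1) * (q * x)) = fun n => 1 - q ^ (n + 1 + 1) * x := by
    ext n; ring
  unfold eulerProd
  rw [e] at h ⊢
  rw [tprod_eq_zero_mul' (f := fun n : ℕ => 1 - q ^ (n + 1) * x) h]
  simp

lemma eulerProd_ne_zero {q : ℂ} (hq : ‖q‖ < 1) {x : ℂ}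
    (h : ∀ n : ℕ, 1 - q ^ (n + 1) * x ≠ 0) : eulerProd q x ≠ 0 := by
  unfold eulerProd
  simp only [sub_eq_add_neg] at h ⊢
  exact tprod_one_add_ne_zero_of_summable h (summable_pow_succ_mul hq x)

lemma differentiable_eulerProd {q : ℂ} (hq : ‖q‖ < 1) : Differentiable ℂ (eulerProd q) := by
  have key : HasProdLocallyUniformlyOn (fun (n : ℕ) (x : ℂ) => 1 + -(q ^ (n + 1) * x))
      (fun x => ∏' n : ℕ, (1 + -(q ^ (n + 1) * x))) Set.univ := by
    apply hasProdLocallyUniformlyOn_of_forall_compact isOpen_univ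
    intro K _ hK
    obtain ⟨R, hR⟩ := hK.isBounded.exists_norm_le
    refine (((summable_nat_add_iff 1).mpr (summable_geometric_of_lt_one (norm_nonneg _)
      hq)).mul_right R).hasProdUniformlyOn_nat_one_add
      hK (.of_forall fun n x hx ↦ ?_) (fun _ ↦ by fun_prop)
    rw [norm_neg, norm_mul, norm_pow]
    exact mul_le_mul_of_nonneg_left (hR x hx) (by positivity)
  have := key.differentiableOn (.of_forall fun s ↦ by
    fun_prop) isOpen_univ
  simpa [differentiableOn_univ, ← sub_eq_add_neg] using! this

lemma norm_jq_lt_one {τ : ℂ} (hτ : 0 < τ.im) : ‖jq τ‖ < 1 := by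
  simpa [jq] using UpperHalfPlane.norm_exp_two_pi_I_lt_one ⟨τ, hτ⟩

/-- The factor of `θ(t)` that does not depend on `t`. -/
noncomputable def thConst (τ : ℂ) : ℂ :=
  Complex.exp (Real.pi * I * τ / 4) * 2 * eulerProd (jq τ) 1

lemma th_eq {τ : ℂ} (hτ : 0 < τ.im) (t : ℂ) :
    th τ t = thConst τ * Complex.sin (Real.pi * t) *
      (eulerProd (jq τ) (Complex.exp (2 * Real.pi * I * t)) *
        eulerProd (jq τ) (Complex.exp (-(2 * Real.pi * I * t)))) := by
  have hq := norm_jq_lt_one hτ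
  unfold th jTheta thConst eulerProd
  rw [(multipliable_eulerProd hq _).tprod_mul (multipliable_eulerProd hq _)]
  simp only [mul_one]
  ring

lemma thConst_ne_zero {τ : ℂ} (hτ : 0 < τ.im) : thConst τ ≠ 0 := by
  refine mul_ne_zero (mul_ne_zero (Complex.exp_ne_zero _) two_ne_zero)
    (eulerProd_ne_zero (norm_jq_lt_one hτ) fun n h => ?_)
  have h1 : jq τ ^ (n + 1) = 1 := by linear_combination -h
  have := pow_lt_one₀ (norm_nonneg _) (norm_jq_lt_one hτ) n.succ_ne_zero
  rw [← norm_pow, h1] at this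
  simp at this

lemma differentiable_th {τ : ℂ} (hτ : 0 < τ.im) : Differentiable ℂ (th τ) := by
  have h := differentiable_eulerProd (norm_jq_lt_one hτ)
  rw [show th τ = _ from funext (th_eq hτ)]
  fun_prop

lemma th_neg {τ : ℂ} (hτ : 0 < τ.im) (t : ℂ) : th τ (-t) = -th τ t := by
  simp only [th_eq hτ, mul_neg, Complex.sin_neg, neg_neg]
  ring

lemma th_zero {τ : ℂ} (hτ : 0 < τ.im) : th τ 0 = 0 := by simp [th_eq hτ]

lemma th_add_one {τ : ℂ} (hτ : 0 < τ.im) (t : ℂ) : th τ (t + 1) = -th τ t := by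
  have e1 : Complex.exp (2 * Real.pi * I * (t + 1)) = Complex.exp (2 * Real.pi * I * t) := by
    rw [mul_add, mul_one, Complex.exp_add, Complex.exp_two_pi_mul_I, mul_one]
  have e2 : Complex.exp (-(2 * Real.pi * I * (t + 1))) =
      Complex.exp (-(2 * Real.pi * I * t)) := by
    rw [Complex.exp_neg, e1, Complex.exp_neg]
  rw [th_eq hτ, th_eq hτ, e1, e2, mul_add, mul_one, Complex.sin_add_pi]
  ring

lemma th_add_tau {τ : ℂ} (hτ : 0 < τ.im) (t : ℂ) :
    th τ (t + τ) = -Complex.exp (-(Real.pi * I * τ) - 2 * Real.pi * I * t) * th τ t := by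
  have hq := norm_jq_lt_one hτ
  -- `s` and `u` are square roots of `e^{2πit}` and of `q`.
  set s := Complex.exp (Real.pi * I * t) with hs
  set u := Complex.exp (Real.pi * I * τ) with hu
  have hs0 : s ≠ 0 := Complex.exp_ne_zero _
  have hu0 : u ≠ 0 := Complex.exp_ne_zero _
  have hjq : jq τ = u ^ 2 := by
    rw [hu, ← Complex.exp_nat_mul, jq]; congr 1; push_cast; ring
  have e1 : Complex.exp (2 * Real.pi * I * t) = s ^ 2 := by
    rw [hs, ← Complex.exp_nat_mul]; congr 1; push_cast; ring
  have e2 : Complex.exp (-(2 * Real.pi * I * t)) = (s ^ 2)⁻¹ := by rw [Complex.exp_neg, e1]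
  have e3 : Complex.exp (2 * Real.pi * I * (t + τ)) = u ^ 2 * s ^ 2 := by
    rw [mul_add, Complex.exp_add, e1, ← hjq, jq, mul_comm]
  have e4 : Complex.exp (-(2 * Real.pi * I * (t + τ))) = (u ^ 2 * s ^ 2)⁻¹ := by
    rw [Complex.exp_neg, e3]
  have e5 : Complex.exp (-(Real.pi * I * τ) - 2 * Real.pi * I * t) = (u * s ^ 2)⁻¹ := by
    rw [sub_eq_add_neg, Complex.exp_add, e2, Complex.exp_neg, mul_inv]
  have s1 : Complex.sin (Real.pi * t) = (s⁻¹ - s) * I / 2 := by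
    rw [Complex.sin, hs, ← Complex.exp_neg]; congr 4 <;> ring_nf
  have s2 : Complex.sin (Real.pi * (t + τ)) = ((u * s)⁻¹ - u * s) * I / 2 := by
    rw [Complex.sin, hs, hu, ← Complex.exp_add, ← Complex.exp_neg]; congr 4 <;> ring_nf
  have a1 := eulerProd_eq hq (s ^ 2)
  have a2 := eulerProd_eq hq ((u ^ 2 * s ^ 2)⁻¹)
  have e6 : u ^ 2 * (u ^ 2 * s ^ 2)⁻¹ = (s ^ 2)⁻¹ := by field_simp
  rw [hjq] at a1 a2
  rw [e6] at a2
  rw [th_eq hτ, th_eq hτ, e1, e2, e3, e4, e5, s1, s2, hjq, a1, a2]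
  field_simp
  ring

lemma th_ne_zero {τ : ℂ} (hτ : 0 < τ.im) {t : ℂ} (ht : ¬ inLat τ t) : th τ t ≠ 0 := by
  have hq := norm_jq_lt_one hτ
  have hpi : (Real.pi : ℂ) ≠ 0 := by exact_mod_cast Real.pi_ne_zero
  have hpow : ∀ n : ℕ, jq τ ^ (n + 1) = Complex.exp (2 * Real.pi * I * ((n + 1) * τ)) := by
    intro n
    rw [jq, ← Complex.exp_nat_mul]; congr 1; push_cast; ring
  rw [th_eq hτ]
  refine mul_ne_zero (mul_ne_zero (thConst_ne_zero hτ) fun h => ?_)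
    (mul_ne_zero (eulerProd_ne_zero hq fun n h => ?_) (eulerProd_ne_zero hq fun n h => ?_))
  · obtain ⟨k, hk⟩ := Complex.sin_eq_zero_iff.mp h
    refine ht ⟨k, 0, ?_⟩
    apply mul_left_cancel₀ hpi
    rw [hk]; push_cast; ring
  · have h1 : Complex.exp (2 * Real.pi * I * ((n + 1) * τ) + 2 * Real.pi * I * t) = 1 := by
      rw [Complex.exp_add, ← hpow]; linear_combination -h
    obtain ⟨k, hk⟩ := Complex.exp_eq_one_iff.mp h1
    refine ht ⟨k, -(n + 1), ?_⟩
    apply mul_left_cancel₀ Complex.two_pi_I_ne_zero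
    push_cast
    linear_combination hk
  · have h1 : Complex.exp (2 * Real.pi * I * ((n + 1) * τ) + -(2 * Real.pi * I * t)) = 1 := by
      rw [Complex.exp_add, ← hpow]; linear_combination -h
    obtain ⟨k, hk⟩ := Complex.exp_eq_one_iff.mp h1
    refine ht ⟨-k, n + 1, ?_⟩
    apply mul_left_cancel₀ Complex.two_pi_I_ne_zero
    push_cast
    linear_combination -hk

lemma thd_ne_zero {τ : ℂ} (hτ : 0 < τ.im) : thd τ ≠ 0 := by
  have hq := norm_jq_lt_one hτ
  have hpi : (Real.pi : ℂ) ≠ 0 := by exact_mod_cast Real.pi_ne_zero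
  have hE := differentiable_eulerProd hq
  set g : ℂ → ℂ := fun t => eulerProd (jq τ) (Complex.exp (2 * Real.pi * I * t)) *
        eulerProd (jq τ) (Complex.exp (-(2 * Real.pi * I * t))) with hg
  have hgd : Differentiable ℂ g := by fun_prop
  have h1 : HasDerivAt (fun t : ℂ => thConst τ * Complex.sin (Real.pi * t))
      (thConst τ * (Complex.cos (Real.pi * 0) * Real.pi)) 0 := by
    simpa using (((hasDerivAt_id (0 : ℂ)).const_mul (Real.pi : ℂ)).csin).const_mul (thConst τ)
  have h2 := h1.mul (hgd 0).hasDerivAt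
  have h3 : thd τ = thConst τ * Real.pi * g 0 := by
    have : (fun t => jTheta t τ) = fun t => thConst τ * Complex.sin (Real.pi * t) * g t :=
      funext (th_eq hτ)
    rw [thd, this]
    refine h2.deriv.trans ?_
    simp
  rw [h3]
  refine mul_ne_zero (mul_ne_zero (thConst_ne_zero hτ) hpi) ?_
  have : eulerProd (jq τ) 1 ≠ 0 := fun h => thConst_ne_zero hτ (by simp [thConst, h])
  simpa [hg] using this

/-! ### Removable singularities, quasi-periodic functions and Liouville -/

/-- `P` extends analytically across `p`, where it may have an arbitrary value or even be
undefined. -/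
def Removable (P : ℂ → ℂ) (p : ℂ) : Prop := ∃ g : ℂ → ℂ, AnalyticAt ℂ g p ∧ P =ᶠ[𝓝[≠] p] g

/-- `f (t + ω) = f t + κ` outside a discrete set. The exceptional set absorbs the arbitrary values
of meromorphic functions at their poles. -/
def QuasiPeriodic (f : ℂ → ℂ) (ω κ : ℂ) : Prop := ∀ p, ∀ᶠ t in 𝓝[≠] p, f (t + ω) = f t + κ

lemma tendsto_add_nhdsNE (p ω : ℂ) : Tendsto (fun t => t + ω) (𝓝[≠] p) (𝓝[≠] (p + ω)) :=
  tendsto_nhdsWithin_iff.mpr ⟨((continuous_id.add continuous_const).tendsto p).mono_left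
    nhdsWithin_le_nhds, by filter_upwards [self_mem_nhdsWithin] with t ht; simpa using ht⟩

/-- The extension across each point is the punctured limit, so the local extensions glue. -/
lemma exists_entire_of_removable {P : ℂ → ℂ} (h : ∀ p, Removable P p) :
    ∃ G : ℂ → ℂ, Differentiable ℂ G ∧ ∀ p, P =ᶠ[𝓝[≠] p] G := by
  choose g hg hPg using h
  have key : ∀ p, (fun t => limUnder (𝓝[≠] t) P) =ᶠ[𝓝 p] g p := by
    intro p
    have h1 : ∀ᶠ x in 𝓝 p, x ≠ p → P x = g p x := eventually_nhdsWithin_iff.mp (hPg p)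
    filter_upwards [h1.eventually_nhds, (hg p).eventually_analyticAt] with y hy hgy
    have hne : ∀ᶠ x in 𝓝[≠] y, x ≠ p := by
      rcases eq_or_ne y p with rfl | hyp
      · exact self_mem_nhdsWithin
      · exact (eventually_ne_nhds hyp).filter_mono nhdsWithin_le_nhds
    refine Tendsto.limUnder_eq ?_
    refine (hgy.continuousAt.tendsto.mono_left nhdsWithin_le_nhds).congr' ?_
    filter_upwards [hne, hy.filter_mono nhdsWithin_le_nhds] with x hx hx' using (hx' hx).symm
  refine ⟨fun t => limUnder (𝓝[≠] t) P, fun p => ?_, fun p => ?_⟩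
  · exact ((hg p).congr (key p).symm).differentiableAt
  · exact (hPg p).trans ((key p).symm.filter_mono nhdsWithin_le_nhds)

lemma Removable.shift {P : ℂ → ℂ} {ω κ p : ℂ} (h : QuasiPeriodic P ω κ) (hR : Removable P p) :
    Removable P (p + ω) := by
  obtain ⟨g, hg, hPg⟩ := hR
  have ht : Tendsto (fun t => t - ω) (𝓝[≠] (p + ω)) (𝓝[≠] p) := by
    simpa [sub_eq_add_neg] using tendsto_add_nhdsNE (p + ω) (-ω)
  refine ⟨fun t => g (t - ω) + κ, ?_, ?_⟩
  · have : AnalyticAt ℂ g (p + ω - ω) := by simpa using hg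
    exact (this.fun_comp (f := fun t => t - ω) (by fun_prop)).add analyticAt_const
  · filter_upwards [ht.eventually hPg, ht.eventually (h p)] with t h1 h2
    rw [← h1, ← h2]; simp

lemma QuasiPeriodic.neg_period {P : ℂ → ℂ} {ω κ : ℂ} (h : QuasiPeriodic P ω κ) :
    QuasiPeriodic P (-ω) (-κ) := by
  intro p
  filter_upwards [(tendsto_add_nhdsNE p (-ω)).eventually (h (p + -ω))] with t ht
  rw [neg_add_cancel_right] at ht
  rw [ht]; ring

lemma Removable.shift_int {P : ℂ → ℂ} {ω κ p : ℂ} (h : QuasiPeriodic P ω κ) (hR : Removable P p)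
    (m : ℤ) : Removable P (p + m * ω) := by
  induction m using Int.induction_on with
  | zero => simpa using hR
  | succ i ih => convert! ih.shift h using 1; push_cast; ring
  | pred i ih => convert! ih.shift h.neg_period using 1; push_cast; ring

lemma QuasiPeriodic.deriv {f : ℂ → ℂ} {ω κ : ℂ} (h : QuasiPeriodic f ω κ) :
    QuasiPeriodic (deriv f) ω 0 := by
  intro p
  have h1 : (fun t => f (t + ω)) =ᶠ[𝓝[≠] p] fun t => f t + κ := h p
  filter_upwards [h1.nhdsNE_deriv] with t ht
  rw [deriv_comp_add_const, deriv_add_const] at ht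
  rw [ht, add_zero]

lemma QuasiPeriodic.const_mul {f : ℂ → ℂ} {ω κ : ℂ} (h : QuasiPeriodic f ω κ) (c : ℂ) :
    QuasiPeriodic (fun t => c * f t) ω (c * κ) := by
  intro p
  filter_upwards [h p] with t ht
  rw [ht]; ring

lemma QuasiPeriodic.add {f g : ℂ → ℂ} {ω κ κ' : ℂ} (h : QuasiPeriodic f ω κ)
    (h' : QuasiPeriodic g ω κ') : QuasiPeriodic (fun t => f t + g t) ω (κ + κ') := by
  intro p
  filter_upwards [h p, h' p] with t ht ht'
  rw [ht, ht']; ring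

lemma QuasiPeriodic.comp_add {f : ℂ → ℂ} {ω κ : ℂ} (h : QuasiPeriodic f ω κ) (c : ℂ) :
    QuasiPeriodic (fun t => f (t + c)) ω κ := by
  intro p
  filter_upwards [(tendsto_add_nhdsNE p c).eventually (h (p + c))] with t ht
  rw [add_right_comm, ht]

lemma QuasiPeriodic.of_entire {P G : ℂ → ℂ} {ω κ : ℂ} (h : QuasiPeriodic P ω κ)
    (hG : Continuous G) (hPG : ∀ p, P =ᶠ[𝓝[≠] p] G) (p : ℂ) : G (p + ω) = G p + κ := by
  have h1 : (fun t => G (t + ω)) =ᶠ[𝓝[≠] p] fun t => G t + κ := by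
    filter_upwards [h p, hPG p, (tendsto_add_nhdsNE p ω).eventually (hPG (p + ω))] with t h1 h2 h3
    rw [← h2, ← h3, h1]
  have h2 : Tendsto (fun t => G (t + ω)) (𝓝[≠] p) (𝓝 (G (p + ω))) :=
    (Continuous.tendsto (by fun_prop) p).mono_left nhdsWithin_le_nhds
  have h3 : Tendsto (fun t => G t + κ) (𝓝[≠] p) (𝓝 (G p + κ)) :=
    (Continuous.tendsto (by fun_prop) p).mono_left nhdsWithin_le_nhds
  exact tendsto_nhds_unique (h2.congr' h1) h3

/-- An entire function which is periodic under `1` and periodic up to a constant under `τ` is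
constant: its derivative is doubly periodic, hence bounded, hence constant by Liouville, so the
function is affine, and an affine function of period `1` is constant. -/
lemma additive_period_eq_zero {τ κ : ℂ} (hτ : 0 < τ.im) {G : ℂ → ℂ} (hG : Differentiable ℂ G)
    (h1 : ∀ t, G (t + 1) = G t) (hκ : ∀ t, G (t + τ) = G t + κ) : κ = 0 := by
  have d1 : Function.Periodic (deriv G) 1 := fun t => by
    rw [← deriv_comp_add_const, funext h1]
  have dτ : Function.Periodic (deriv G) τ := fun t => by
    rw [← deriv_comp_add_const, funext hκ, deriv_add_const]
  have hdG : Differentiable ℂ (deriv G) := fun t =>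
    ((hG.analyticAt t).deriv).differentiableAt
  have hc : Continuous fun x : ℝ × ℝ => deriv G ((x.1 : ℂ) + x.2 * τ) := by
    have := hdG.continuous
    fun_prop
  have hb : Bornology.IsBounded (Set.range (deriv G)) := by
    refine ((isCompact_Icc (a := ((0, 0) : ℝ × ℝ)) (b := (1, 1))).image hc).isBounded.subset ?_
    rintro _ ⟨t, rfl⟩
    set y : ℝ := t.im / τ.im with hy
    set x : ℝ := t.re - y * τ.re with hx
    have ht : t = (x : ℂ) + y * τ := by
      apply Complex.ext
      · simp [hx]
      · simp [hy, hτ.ne']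
    refine ⟨(Int.fract x, Int.fract y), ⟨⟨Int.fract_nonneg _, Int.fract_nonneg _⟩,
      ⟨(Int.fract_lt_one _).le, (Int.fract_lt_one _).le⟩⟩, ?_⟩
    have e : t = ((Int.fract x : ℝ) : ℂ) + (Int.fract y : ℝ) * τ + (⌊x⌋ : ℤ) * 1
        + (⌊y⌋ : ℤ) * τ := by
      rw [ht]
      nth_rewrite 1 [← Int.fract_add_floor x, ← Int.fract_add_floor y]
      push_cast; ring
    rw [e, dτ.int_mul ⌊y⌋ _, d1.int_mul ⌊x⌋ _]
  obtain ⟨α, hα⟩ := hdG.exists_const_forall_eq_of_bounded hb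
  have haff : ∀ s t, G s - α * s = G t - α * t := by
    refine is_const_of_deriv_eq_zero (f := fun t => G t - α * t) (by fun_prop) fun t => ?_
    have := ((hG t).hasDerivAt.sub ((hasDerivAt_id t).const_mul α)).deriv
    rw [hα] at this
    refine this.trans (by simp)
  have hα0 : α = 0 := by
    have := haff (0 + 1) 0
    rw [h1] at this
    linear_combination -this
  have := haff (0 + τ) 0
  rw [hκ, hα0] at this
  linear_combination this

/-! ### Laurent expansions and circle integrals -/

lemma AnalyticAt.exists_eq_add_mul {f : ℂ → ℂ} {p : ℂ} (hf : AnalyticAt ℂ f p) :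
    ∃ g : ℂ → ℂ, AnalyticAt ℂ g p ∧ ∀ t, f t = f p + (t - p) * g t := by
  obtain ⟨s, hs⟩ := hf
  refine ⟨dslope f p, ⟨_, hs.has_fpower_series_dslope_fslope⟩, fun t => ?_⟩
  have := sub_smul_dslope f p t
  rw [smul_eq_mul] at this
  rw [this]; ring

/-- The residue at `0` read off a Laurent expansion. -/
lemma circleIntegral_laurent {f k : ℂ → ℂ} {a₀ a₁ a₂ : ℂ} (hk : AnalyticAt ℂ k 0)
    (hf : ∀ t, t ≠ 0 → f t = a₀ / t ^ 3 + a₁ / t ^ 2 + a₂ / t + k t) :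
    ∃ ε > 0, ∀ r : ℝ, 0 < r → r < ε →
      (2 * Real.pi * I : ℂ)⁻¹ * (∮ t in C(0, r), f t) = a₂ := by
  obtain ⟨ε, hε, hball⟩ := Metric.eventually_nhds_iff_ball.mp hk.eventually_analyticAt
  refine ⟨ε, hε, fun r hr hrε => ?_⟩
  have hkd : DifferentiableOn ℂ k (Metric.closedBall 0 r) := fun t ht =>
    (hball t (Metric.closedBall_subset_ball hrε ht)).differentiableAt.differentiableWithinAt
  have hk0 : (∮ t in C(0, r), k t) = 0 :=
    Complex.circleIntegral_eq_zero_of_differentiable_on_off_countable hr.le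
      Set.countable_empty hkd.continuousOn fun t ht =>
        (hball t (Metric.ball_subset_ball hrε.le ht.1)).differentiableAt
  have hki : CircleIntegrable k 0 r :=
    (hkd.continuousOn.mono Metric.sphere_subset_closedBall).circleIntegrable hr.le
  have hzi : ∀ (a : ℂ) (n : ℤ), CircleIntegrable (fun t => a * (t - 0) ^ n) 0 r := fun a n =>
    (circleIntegrable_sub_zpow_iff.mpr (by simp [eq_comm (a := (0 : ℝ)), hr.ne'])).const_smul (a := a)
  set A : ℂ → ℂ := fun t => a₀ * (t - 0) ^ (-3 : ℤ)
  set B : ℂ → ℂ := fun t => a₁ * (t - 0) ^ (-2 : ℤ)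
  set C : ℂ → ℂ := fun t => a₂ * (t - 0) ^ (-1 : ℤ)
  have hadd : ∀ f g : ℂ → ℂ, CircleIntegrable f 0 r → CircleIntegrable g 0 r →
      (∮ t in C(0, r), (f + g) t) = (∮ t in C(0, r), f t) + ∮ t in C(0, r), g t :=
    fun f g hf hg => circleIntegral.integral_add hf hg
  have e : Set.EqOn f (A + B + C + k) (Metric.sphere 0 r) := by
    intro t ht
    have ht0 : t ≠ 0 := by
      rintro rfl
      simp at ht
      exact hr.ne ht
    rw [hf t ht0]
    simp only [Pi.add_apply, A, B, C, sub_zero, zpow_neg, div_eq_mul_inv, zpow_one]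
    norm_cast
  rw [circleIntegral.integral_congr hr.le e,
    hadd _ _ (((hzi _ _).add (hzi _ _)).add (hzi _ _)) hki,
    hadd _ _ ((hzi _ _).add (hzi _ _)) (hzi _ _), hadd _ _ (hzi _ _) (hzi _ _), hk0]
  simp only [circleIntegral.integral_const_mul, A, B, C]
  rw [circleIntegral.integral_sub_zpow_of_ne (by norm_num),
    circleIntegral.integral_sub_zpow_of_ne (by norm_num)]
  simp only [zpow_neg_one]
  rw [circleIntegral.integral_sub_center_inv 0 hr.ne']
  field_simp [Complex.two_pi_I_ne_zero]
  simp

/-! ### The logarithmic derivative of the theta function -/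

lemma analyticAt_th {τ : ℂ} (hτ : 0 < τ.im) (p : ℂ) : AnalyticAt ℂ (th τ) p :=
  (differentiable_th hτ).analyticAt p

lemma eventually_th_ne_zero {τ : ℂ} (hτ : 0 < τ.im) (p : ℂ) : ∀ᶠ t in 𝓝[≠] p, th τ t ≠ 0 := by
  by_contra h
  have h0 := AnalyticOnNhd.eqOn_zero_of_preconnected_of_frequently_eq_zero
    (fun x _ => analyticAt_th hτ x) isPreconnected_univ (Set.mem_univ p)
    ((Filter.not_eventually.mp h).mono fun _ => not_not.mp)
  refine thd_ne_zero hτ ?_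
  have : (fun t => jTheta t τ) = fun _ => 0 := funext fun t => h0 (Set.mem_univ t)
  rw [thd, this, deriv_const]

/-- The zero of `θ` at `0` is simple. -/
lemma exists_th_eq_mul {τ : ℂ} (hτ : 0 < τ.im) :
    ∃ e : ℂ → ℂ, AnalyticAt ℂ e 0 ∧ e 0 = thd τ ∧ ∀ t, th τ t = t * e t := by
  refine ⟨dslope (th τ) 0, ?_, dslope_same _ _, fun t => ?_⟩
  · obtain ⟨s, hs⟩ := analyticAt_th hτ 0
    exact ⟨_, hs.has_fpower_series_dslope_fslope⟩
  · have := sub_smul_dslope (th τ) 0 t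
    rw [smul_eq_mul, th_zero hτ, sub_zero, sub_zero] at this
    exact this.symm

lemma logDeriv_th_add_one {τ : ℂ} (hτ : 0 < τ.im) : QuasiPeriodic (logDeriv (th τ)) 1 0 := by
  refine fun p => .of_forall fun t => ?_
  rw [logDeriv_apply, logDeriv_apply, ← deriv_comp_add_const, funext (th_add_one hτ),
    th_add_one hτ, show deriv (fun t => -th τ t) t = _ from deriv.neg, neg_div_neg_eq, add_zero]

lemma logDeriv_th_add_tau {τ : ℂ} (hτ : 0 < τ.im) :
    QuasiPeriodic (logDeriv (th τ)) τ (-(2 * Real.pi * I)) := by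
  intro p
  filter_upwards [eventually_th_ne_zero hτ p] with t ht
  set M : ℂ → ℂ := fun t => -Complex.exp (-(Real.pi * I * τ) - 2 * Real.pi * I * t) with hM
  have hM' : HasDerivAt M (-(2 * Real.pi * I) * M t) t := by
    have := ((((hasDerivAt_id t).const_mul (2 * Real.pi * I)).const_sub
      (-(Real.pi * I * τ))).cexp).neg
    refine this.congr_deriv ?_
    simp only [hM, id]; ring
  have h1 := (hM'.mul (differentiable_th hτ t).hasDerivAt).deriv
  have hM0 : M t ≠ 0 := neg_ne_zero.mpr (Complex.exp_ne_zero _)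
  have h2 : (fun t => th τ (t + τ)) = M * th τ := funext (th_add_tau hτ)
  rw [logDeriv_apply, logDeriv_apply, ← deriv_comp_add_const, h2, h1,
    show th τ (t + τ) = M t * th τ t from th_add_tau hτ t]
  field_simp
  ring

/-- `θ'/θ` has a simple pole with residue `1` at `0`. -/
lemma logDeriv_th_near_zero {τ : ℂ} (hτ : 0 < τ.im) :
    ∃ l : ℂ → ℂ, AnalyticAt ℂ l 0 ∧ logDeriv (th τ) =ᶠ[𝓝[≠] 0] fun t => t⁻¹ + l t := by
  obtain ⟨e, he, he0, hth⟩ := exists_th_eq_mul hτ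
  have he0' : e 0 ≠ 0 := he0 ▸ thd_ne_zero hτ
  refine ⟨fun t => deriv e t / e t, he.deriv.fun_div he he0', ?_⟩
  filter_upwards [self_mem_nhdsWithin, he.eventually_analyticAt.filter_mono nhdsWithin_le_nhds,
    (he.continuousAt.eventually_ne he0').filter_mono nhdsWithin_le_nhds] with t ht hte hte0
  have ht0 : t ≠ 0 := ht
  have h := ((hasDerivAt_id t).mul hte.differentiableAt.hasDerivAt).deriv
  have h2 : th τ = id * e := funext hth
  rw [logDeriv_apply, h2, h]
  simp only [Pi.mul_apply, id]
  field_simp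

/-- Principal parts at `0` of the first two derivatives of a function with principal part `1/t`. -/
lemma deriv_inv_add {f l : ℂ → ℂ} (hl : AnalyticAt ℂ l 0)
    (hf : f =ᶠ[𝓝[≠] 0] fun t => t⁻¹ + l t) :
    (deriv f =ᶠ[𝓝[≠] 0] fun t => -(t ^ 2)⁻¹ + deriv l t) ∧
    (deriv (deriv f) =ᶠ[𝓝[≠] 0] fun t => 2 * (t ^ 3)⁻¹ + deriv (deriv l) t) := by
  have h1 : deriv f =ᶠ[𝓝[≠] 0] fun t => -(t ^ 2)⁻¹ + deriv l t := by
    refine hf.nhdsNE_deriv.trans ?_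
    filter_upwards [self_mem_nhdsWithin,
      hl.eventually_analyticAt.filter_mono nhdsWithin_le_nhds] with t ht hlt
    exact ((hasDerivAt_inv ht).add hlt.differentiableAt.hasDerivAt).deriv
  refine ⟨h1, h1.nhdsNE_deriv.trans ?_⟩
  filter_upwards [self_mem_nhdsWithin,
    hl.deriv.eventually_analyticAt.filter_mono nhdsWithin_le_nhds] with t ht hlt
  have ht0 : t ≠ 0 := ht
  refine (((((hasDerivAt_pow 2 t).inv (pow_ne_zero 2 ht0)).neg).add
    hlt.differentiableAt.hasDerivAt).congr_deriv ?_).deriv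
  field_simp
  ring

/-! ### Ellipticity and poles of the function F₁ -/

/-- The factors of automorphy of the thetas cancel, since the arguments in the numerator and in
the denominator of `F₁` both sum to `4t - z`. -/
lemma F₁_add_one {τ : ℂ} (hτ : 0 < τ.im) (z t : ℂ) : F₁ τ z (t + 1) = F₁ τ z t := by
  have h : ∀ c, th τ (t + 1 + c) = -th τ (t + c) := fun c => by
    rw [add_right_comm, th_add_one hτ]
  unfold F₁
  simp only [sub_eq_add_neg, h, th_add_one hτ]
  simp only [div_eq_mul_inv, mul_inv, inv_neg]
  ring

lemma F₁_add_tau {τ : ℂ} (hτ : 0 < τ.im) (z t : ℂ) : F₁ τ z (t + τ) = F₁ τ z t := by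
  set m := -Complex.exp (-(Real.pi * I * τ) - 2 * Real.pi * I * t) with hm
  set y := Complex.exp (2 * Real.pi * I * z) with hy
  have hm0 : m ≠ 0 := neg_ne_zero.mpr (Complex.exp_ne_zero _)
  have hy0 : y ≠ 0 := Complex.exp_ne_zero _
  have key : ∀ c, th τ (t + τ + c) = m * (Complex.exp (2 * Real.pi * I * c))⁻¹ * th τ (t + c) := by
    intro c
    rw [add_right_comm, th_add_tau hτ, hm, ← Complex.exp_neg, neg_mul, neg_mul, neg_mul,
      ← Complex.exp_add]
    congr 3; ring
  have h0 : th τ (t + τ) = m * th τ t := th_add_tau hτ t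
  have e2 : Complex.exp (2 * Real.pi * I * (2 * z)) = y ^ 2 := by
    rw [hy, ← Complex.exp_nat_mul]; congr 1; push_cast; ring
  have e3 : Complex.exp (2 * Real.pi * I * (-(2 * z))) = (y ^ 2)⁻¹ := by
    rw [mul_neg, Complex.exp_neg, e2]
  have e4 : Complex.exp (2 * Real.pi * I * (-z)) = y⁻¹ := by rw [mul_neg, Complex.exp_neg]
  unfold F₁
  simp only [sub_eq_add_neg, key, h0, e2, e3, e4, ← hy, inv_inv]
  simp only [div_eq_mul_inv, mul_inv]
  field_simp

lemma F₁_eq {τ z : ℂ} (hz : th τ z ≠ 0) (t : ℂ) : F₁ τ z t =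
    th τ (t + z) * th τ (t + 2 * z) * th τ (t + -(2 * z)) * th τ (t + -(2 * z)) /
      (th τ t ^ 3 * th τ (t + -z)) *
      (thd τ ^ 3 / (th τ (2 * z) * th τ (-(2 * z)) * th τ (2 * z))) := by
  simp only [F₁, sub_eq_add_neg]
  field_simp

lemma analyticAt_th_add {τ : ℂ} (hτ : 0 < τ.im) (c p : ℂ) :
    AnalyticAt ℂ (fun t => th τ (t + c)) p :=
  (analyticAt_th hτ (p + c)).fun_comp (f := fun t => t + c) (by fun_prop)

lemma analyticAt_F₁ {τ z p : ℂ} (hτ : 0 < τ.im) (hz : th τ z ≠ 0) (hp : th τ p ≠ 0)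
    (hpz : th τ (p + -z) ≠ 0) : AnalyticAt ℂ (F₁ τ z) p := by
  have hA := fun c => analyticAt_th_add hτ c p
  rw [funext (F₁_eq hz)]
  exact (((((hA _).fun_mul (hA _)).fun_mul (hA _)).fun_mul (hA _)).fun_div
    (((analyticAt_th hτ p).fun_pow 3).fun_mul (hA _))
    (mul_ne_zero (pow_ne_zero 3 hp) hpz)).fun_mul analyticAt_const

/-- The Laurent expansion of `F₁` at its triple pole `0`. -/
lemma F₁_near_zero {τ z : ℂ} (hτ : 0 < τ.im) (hz : th τ z ≠ 0) :
    ∃ (a₀ a₁ a₂ : ℂ) (k : ℂ → ℂ), AnalyticAt ℂ k 0 ∧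
      ∀ t, t ≠ 0 → F₁ τ z t = a₀ / t ^ 3 + a₁ / t ^ 2 + a₂ / t + k t := by
  obtain ⟨e, he, he0, hth⟩ := exists_th_eq_mul hτ
  have hA := analyticAt_th_add hτ
  have he0' : e 0 ≠ 0 := he0 ▸ thd_ne_zero hτ
  have hz' : th τ (0 + -z) ≠ 0 := by rw [zero_add, th_neg hτ]; exact neg_ne_zero.mpr hz
  set H : ℂ → ℂ := fun t => th τ (t + z) * th τ (t + 2 * z) * th τ (t + -(2 * z)) *
    th τ (t + -(2 * z)) / (e t ^ 3 * th τ (t + -z)) *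
    (thd τ ^ 3 / (th τ (2 * z) * th τ (-(2 * z)) * th τ (2 * z))) with hH
  have hHa : AnalyticAt ℂ H 0 :=
    ((((((hA _ _).fun_mul (hA _ _)).fun_mul (hA _ _)).fun_mul (hA _ _)).fun_div
      ((he.fun_pow 3).fun_mul (hA _ _)) (mul_ne_zero (pow_ne_zero 3 he0') hz')).fun_mul
      analyticAt_const)
  obtain ⟨H₁, hH₁a, hH₁⟩ := hHa.exists_eq_add_mul
  obtain ⟨H₂, hH₂a, hH₂⟩ := hH₁a.exists_eq_add_mul
  obtain ⟨H₃, hH₃a, hH₃⟩ := hH₂a.exists_eq_add_mul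
  refine ⟨H 0, H₁ 0, H₂ 0, H₃, hH₃a, fun t ht => ?_⟩
  have h1 : F₁ τ z t = H t / t ^ 3 := by
    rw [F₁_eq hz, hth t]
    simp only [hH, div_eq_mul_inv, mul_inv, mul_pow]
    ring
  rw [h1, hH₁, hH₂, hH₃]
  field_simp
  ring

/-- The simple pole of `F₁` at `z`, with its residue. -/
lemma F₁_near_z {τ z : ℂ} (hτ : 0 < τ.im) (hz : th τ z ≠ 0) :
    ∃ k : ℂ → ℂ, AnalyticAt ℂ k z ∧ ∀ t, t ≠ z → F₁ τ z t =
      -((thd τ / th τ z) ^ 2 * (th τ (3 * z) * th τ z / (th τ (2 * z)) ^ 2)) / (t - z) + k t := by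
  obtain ⟨e, he, he0, hth⟩ := exists_th_eq_mul hτ
  have hA := analyticAt_th_add hτ
  have he0' : e 0 ≠ 0 := he0 ▸ thd_ne_zero hτ
  have hea : AnalyticAt ℂ (fun t => e (t - z)) z := by
    have : AnalyticAt ℂ e (z - z) := by rwa [sub_self]
    exact this.fun_comp (f := fun t => t - z) (by fun_prop)
  have hez : e (z - z) ≠ 0 := by rwa [sub_self]
  set K : ℂ → ℂ := fun t => th τ (t + z) * th τ (t + 2 * z) * th τ (t + -(2 * z)) *
    th τ (t + -(2 * z)) / (th τ t ^ 3 * e (t - z)) *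
    (thd τ ^ 3 / (th τ (2 * z) * th τ (-(2 * z)) * th τ (2 * z))) with hK
  have hKa : AnalyticAt ℂ K z :=
    ((((((hA _ _).fun_mul (hA _ _)).fun_mul (hA _ _)).fun_mul (hA _ _)).fun_div
      (((analyticAt_th hτ z).fun_pow 3).fun_mul hea) (mul_ne_zero (pow_ne_zero 3 hz) hez)).fun_mul
      analyticAt_const)
  obtain ⟨k, hka, hk⟩ := hKa.exists_eq_add_mul
  refine ⟨k, hka, fun t ht => ?_⟩
  have ht' : t - z ≠ 0 := sub_ne_zero.mpr ht
  have h1 : F₁ τ z t = K t / (t - z) := by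
    rw [F₁_eq hz, ← sub_eq_add_neg, ← sub_eq_add_neg, hth (t - z)]
    simp only [hK, div_eq_mul_inv, mul_inv, ← sub_eq_add_neg]
    ring
  have h2 : K z = -((thd τ / th τ z) ^ 2 * (th τ (3 * z) * th τ z / (th τ (2 * z)) ^ 2)) := by
    have hd := thd_ne_zero hτ
    simp only [hK, sub_self, he0]
    rw [show z + z = 2 * z by ring, show z + 2 * z = 3 * z by ring,
      show z + -(2 * z) = -z by ring, th_neg hτ, th_neg hτ]
    field_simp
  rw [h1, hk, h2]
  field_simp

/-! ### The sum of residues -/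

/-- The residue theorem for `F₁` on the torus: the residues at `0` and at `z` add up to zero.
Subtracting the principal parts, carried by `L = θ'/θ` and its derivatives, leaves an entire
function, whose period `τ` is additive with constant `2πi` times the sum of residues. -/
lemma residue_sum_eq_zero {τ z : ℂ} (hτ : 0 < τ.im) (hz : th τ z ≠ 0)
    {a₀ a₁ a₂ c : ℂ} {k k' : ℂ → ℂ} (hk : AnalyticAt ℂ k 0) (hk' : AnalyticAt ℂ k' z)
    (h0 : ∀ t, t ≠ 0 → F₁ τ z t = a₀ / t ^ 3 + a₁ / t ^ 2 + a₂ / t + k t)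
    (h1 : ∀ t, t ≠ z → F₁ τ z t = c / (t - z) + k' t) : c + a₂ = 0 := by
  obtain ⟨l, hl, hLl⟩ := logDeriv_th_near_zero hτ
  have hL1 := logDeriv_th_add_one hτ
  have hLτ := logDeriv_th_add_tau hτ
  have hLa : ∀ p, th τ p ≠ 0 → AnalyticAt ℂ (logDeriv (th τ)) p := fun p hp =>
    (analyticAt_th hτ p).deriv.div (analyticAt_th hτ p) hp
  generalize logDeriv (th τ) = L at hLl hL1 hLτ hLa
  obtain ⟨hLl1, hLl2⟩ := deriv_inv_add hl hLl
  -- Since `L' = -1/t² + …` and `L'' = 2/t³ + …`, these coefficients cancel both principal parts.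
  set P : ℂ → ℂ := fun t => F₁ τ z t + ((-c) * L (t + -z) + ((-a₂) * L t + (a₁ * deriv L t +
    (-(a₀ / 2)) * deriv (deriv L) t))) with hP
  have hper : ∀ ω κ, (∀ t, F₁ τ z (t + ω) = F₁ τ z t) → QuasiPeriodic L ω κ →
      QuasiPeriodic P ω (-(c + a₂) * κ) := by
    intro ω κ hF hLω
    have hF' : QuasiPeriodic (F₁ τ z) ω 0 := fun p => .of_forall fun t => by rw [hF, add_zero]
    convert! hF'.add (((hLω.comp_add (-z)).const_mul (-c)).add ((hLω.const_mul (-a₂)).add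
      ((hLω.deriv.const_mul a₁).add (hLω.deriv.deriv.const_mul (-(a₀ / 2)))))) using 1
    ring
  have P1 := hper 1 0 (F₁_add_one hτ z) hL1
  have Pτ := hper τ _ (F₁_add_tau hτ z) hLτ
  have hcomb : ∀ {p : ℂ} {f f₀ f₁ : ℂ → ℂ}, AnalyticAt ℂ f p → AnalyticAt ℂ f₀ (p + -z) →
      AnalyticAt ℂ f₁ p → AnalyticAt ℂ (fun t => f t + ((-c) * f₀ (t + -z) + ((-a₂) * f₁ t +
        (a₁ * deriv f₁ t + (-(a₀ / 2)) * deriv (deriv f₁) t)))) p := by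
    intro p f f₀ f₁ hf hf₀ hf₁
    have h₀ : AnalyticAt ℂ (fun t => f₀ (t + -z)) p :=
      hf₀.fun_comp (f := fun t => t + -z) (by fun_prop)
    exact hf.fun_add ((analyticAt_const.fun_mul h₀).fun_add
      ((analyticAt_const.fun_mul hf₁).fun_add ((analyticAt_const.fun_mul hf₁.deriv).fun_add
        (analyticAt_const.fun_mul hf₁.deriv.deriv))))
  have hz' : th τ (-z) ≠ 0 := by rw [th_neg hτ]; exact neg_ne_zero.mpr hz
  have R0 : Removable P 0 := by
    refine ⟨_, hcomb hk (hLa (0 + -z) (by rwa [zero_add])) hl, ?_⟩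
    filter_upwards [self_mem_nhdsWithin, hLl, hLl1, hLl2] with t ht e1 e2 e3
    have ht0 : t ≠ 0 := ht
    simp only [hP]
    rw [h0 t ht0, e1, e2, e3]
    field_simp
    ring
  have Rz : Removable P z := by
    refine ⟨_, hcomb hk' (f₀ := l) (by rwa [add_neg_cancel]) (hLa z hz), ?_⟩
    have hLz := (tendsto_add_nhdsNE z (-z)).eventually (by rw [add_neg_cancel]; exact hLl)
    filter_upwards [self_mem_nhdsWithin, hLz] with t ht e1
    have ht0 : t - z ≠ 0 := sub_ne_zero.mpr ht
    simp only [hP]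
    rw [h1 t ht, e1, ← sub_eq_add_neg]
    field_simp
    ring
  have Rother : ∀ p, th τ p ≠ 0 → th τ (p + -z) ≠ 0 → Removable P p := fun p hp hpz =>
    ⟨P, hcomb (analyticAt_F₁ hτ hz hp hpz) (hLa _ hpz) (hLa p hp), .rfl⟩
  -- Every lattice translate of the poles reduces to `0` or `z` by quasi-periodicity.
  have hall : ∀ p, Removable P p := by
    intro p
    by_cases hp : inLat τ p
    · obtain ⟨m, n, rfl⟩ := hp
      simpa using (R0.shift_int P1 m).shift_int Pτ n
    by_cases hpz : inLat τ (p + -z)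
    · obtain ⟨m, n, hmn⟩ := hpz
      have := (Rz.shift_int P1 m).shift_int Pτ n
      convert! this using 1
      linear_combination hmn
    exact Rother p (th_ne_zero hτ hp) (th_ne_zero hτ hpz)
  obtain ⟨G, hG, hPG⟩ := exists_entire_of_removable hall
  have := additive_period_eq_zero hτ hG
    (fun t => by simpa using P1.of_entire hG.continuous hPG t)
    (Pτ.of_entire hG.continuous hPG)
  have h2 : (c + a₂) * (2 * Real.pi * I) = 0 := by linear_combination this
  exact (mul_eq_zero.mp h2).resolve_right Complex.two_pi_I_ne_zero

/-- The residue of `F₁` at `t = 0`, computed as `(1/2πi)` times the integral over a small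
positively oriented circle around `0`, equals `(θ'(0)/θ(z))²·θ(3z)θ(z)/θ(2z)²`. -/
theorem F₁_residue_at_zero (τ z : ℂ) (hτ : 0 < τ.im)
    (hz : ¬ inLat τ z) (h2z : ¬ inLat τ (2 * z)) :
    ∃ ε > 0, ∀ r : ℝ, 0 < r → r < ε →
      (2 * Real.pi * I : ℂ)⁻¹ * (∮ t in C(0, r), F₁ τ z t) =
        (thd τ / th τ z) ^ 2 * (th τ (3 * z) * th τ z / (th τ (2 * z)) ^ 2) := by
  have hz' := th_ne_zero hτ hz
  obtain ⟨a₀, a₁, a₂, k, hk, h0⟩ := F₁_near_zero hτ hz'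
  obtain ⟨k', hk', h1⟩ := F₁_near_z hτ hz'
  have h := residue_sum_eq_zero hτ hz' hk hk' h0 h1
  obtain ⟨ε, hε, H⟩ := circleIntegral_laurent hk h0
  refine ⟨ε, hε, fun r hr hrε => ?_⟩
  rw [H r hr hrε]
  linear_combination h
end
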